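/- Let A be a Hermitian complex matrix with rows and columns indexed by a finite set V, let x be a vector with A x = 0, and let W_1, …, W_k be pairwise disjoint subsets of V such that the support of x is contained in W_1 ∪ ⋯ ∪ W_k and A u v = 0 whenever u ∈ W_i, v ∈ W_j, and i ≠ j. For each i let x̂_i be the vector agreeing with x on W_i and equal to 0 elsewhere. Then every vector y in the span of x̂_1, …, x̂_k satisfies yᕽ A y = 0; that is, the span of x̂_1, …, x̂_k is an isotropic subspace of A. -/

import Mathlib

open scoped Matrix

/-!
If `u ∈ W i`, then row `u` of `A` vanishes on every other block, so `A x̂ᵢ` and `A x` agree at `u`,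
while `A x̂ⱼ` vanishes at `u` for `j ≠ i`. Hence `A y = 0` on `⋃ i, W i` for every `y` in the span
of the `x̂ᵢ`. Every vector in that span is supported in `⋃ i, W i`, so each term `ȳᵤ (A y)ᵤ` of
`yᴴ A y` is zero.
-/

section

variable {V m ι R S M : Type*}

theorem support_subset_of_mem_span [Semiring S] [AddCommMonoid M] [Module S M]
    {s : Set V} {t : Set (V → M)} {y : V → M} (ht : ∀ w ∈ t, Function.support w ⊆ s)
    (hy : y ∈ Submodule.span S t) : Function.support y ⊆ s := by
  simp only [Function.support_subset_iff'] at ht ⊢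
  intro u hu
  induction hy using Submodule.span_induction with
  | mem w hw => exact ht w hw u hu
  | zero => rfl
  | add w w' _ _ hw hw' => rw [Pi.add_apply, hw, hw', add_zero]
  | smul c w _ hw => rw [Pi.smul_apply, hw, smul_zero]

variable [Fintype V] [NonUnitalNonAssocSemiring R]

theorem dotProduct_eq_zero_of_eqOn_support {z w : V → R}
    (h : Set.EqOn w 0 (Function.support z)) : z ⬝ᵥ w = 0 := by
  refine Finset.sum_eq_zero fun u _ => ?_
  by_cases hu : z u = 0
  · rw [hu, zero_mul]
  · rw [h hu, Pi.zero_apply, mul_zero]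

theorem mulVec_eqOn_zero_of_mem_span [Semiring S] [Module S R] [SMulCommClass S R R]
    {A : Matrix m V R} {s : Set m} {t : Set (V → R)} {y : V → R}
    (ht : ∀ w ∈ t, Set.EqOn (A *ᵥ w) 0 s) (hy : y ∈ Submodule.span S t) :
    Set.EqOn (A *ᵥ y) 0 s := by
  intro u hu
  induction hy using Submodule.span_induction with
  | mem w hw => exact ht w hw hu
  | zero => rw [Matrix.mulVec_zero]
  | add w w' _ _ hw hw' => rw [Matrix.mulVec_add, Pi.add_apply, hw, hw', Pi.zero_apply, add_zero]
  | smul c w _ hw => rw [Matrix.mulVec_smul, Pi.smul_apply, hw, Pi.zero_apply, smul_zero]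

theorem mulVec_indicator_eqOn_mulVec {A : Matrix m V R} {x : V → R} {s : Set m} {t : Set V}
    (h : ∀ u ∈ s, ∀ v ∉ t, x v ≠ 0 → A u v = 0) :
    Set.EqOn (A *ᵥ t.indicator x) (A *ᵥ x) s := by
  intro u hu
  suffices hterm : ∀ v, A u v * t.indicator x v = A u v * x v from
    Finset.sum_congr rfl fun v _ => hterm v
  intro v
  by_cases hvt : v ∈ t
  · rw [Set.indicator_of_mem hvt]
  rw [Set.indicator_of_notMem hvt, mul_zero]
  by_cases hxv : x v = 0
  · rw [hxv, mul_zero]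
  · rw [h u hu v hvt hxv, zero_mul]

theorem mulVec_indicator_eqOn_zero {A : Matrix m V R} {x : V → R} {s : Set m} {t : Set V}
    (h : ∀ u ∈ s, ∀ v ∈ t, A u v = 0) :
    Set.EqOn (A *ᵥ t.indicator x) 0 s :=
  fun u hu => dotProduct_eq_zero_of_eqOn_support fun v huv =>
    Set.indicator_of_notMem (fun hvt => huv (h u hu v hvt)) x

section Blocks

variable {A : Matrix V V R} {x : V → R} {W : ι → Set V}

theorem mulVec_indicator_eqOn_zero_iUnion
    (hblock : Pairwise fun i j => ∀ u ∈ W i, ∀ v ∈ W j, A u v = 0)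
    (hsupp : Function.support x ⊆ ⋃ i, W i) (hx : Set.EqOn (A *ᵥ x) 0 (⋃ i, W i)) (j : ι) :
    Set.EqOn (A *ᵥ (W j).indicator x) 0 (⋃ i, W i) := by
  intro u hu
  obtain ⟨i, hui⟩ := Set.mem_iUnion.1 hu
  obtain rfl | hij := eq_or_ne i j
  · have hrow : ∀ r ∈ W i, ∀ v ∉ W i, x v ≠ 0 → A r v = 0 := by
      intro r hr v hv hxv
      obtain ⟨l, hvl⟩ := Set.mem_iUnion.1 (hsupp hxv)
      have hil : i ≠ l := fun h => hv (h ▸ hvl)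
      exact hblock hil r hr v hvl
    exact (mulVec_indicator_eqOn_mulVec hrow hui).trans (hx hu)
  · exact mulVec_indicator_eqOn_zero (hblock hij) hui

theorem span_of_component_restrictions_isotropic_general [StarAddMonoid R]
    [Semiring S] [Module S R] [SMulCommClass S R R]
    (hblock : Pairwise fun i j => ∀ u ∈ W i, ∀ v ∈ W j, A u v = 0)
    (hsupp : Function.support x ⊆ ⋃ i, W i) (hx : Set.EqOn (A *ᵥ x) 0 (⋃ i, W i))
    {y z : V → R} (hy : y ∈ Submodule.span S (Set.range fun i => (W i).indicator x))
    (hz : z ∈ Submodule.span S (Set.range fun i => (W i).indicator x)) :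
    star z ⬝ᵥ A *ᵥ y = 0 := by
  have hAy : Set.EqOn (A *ᵥ y) 0 (⋃ i, W i) :=
    mulVec_eqOn_zero_of_mem_span
      (Set.forall_mem_range.2 (mulVec_indicator_eqOn_zero_iUnion hblock hsupp hx)) hy
  have hz_supp : Function.support z ⊆ ⋃ i, W i :=
    support_subset_of_mem_span (Set.forall_mem_range.2 fun i =>
      Set.support_indicator_subset.trans (Set.subset_iUnion W i)) hz
  have hstar : Function.support (star z) ⊆ Function.support z :=
    fun _ => star_ne_zero.1
  exact dotProduct_eq_zero_of_eqOn_support (hAy.mono (hstar.trans hz_supp))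

end Blocks

end

/-- If `A x = 0` for a Hermitian matrix `A`, and `W₁, …, W_k` are pairwise disjoint
sets of indices containing the support of `x` with no nonzero entries of `A` between
distinct `W_i`'s, then the span of the restrictions `x̂_i` of `x` to the `W_i` is an
isotropic subspace of `A`. -/
theorem span_of_component_restrictions_isotropic
    {V : Type*} [Fintype V] [DecidableEq V]
    (A : Matrix V V ℂ) (hA : A.IsHermitian)
    (x : V → ℂ) (hx : A.mulVec x = 0)
    (k : ℕ) (W : Fin k → Finset V)
    (hdisj : ∀ i j : Fin k, i ≠ j → Disjoint (W i) (W j))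
    (hsupp : ∀ u : V, x u ≠ 0 → ∃ i : Fin k, u ∈ W i)
    (hblock : ∀ i j : Fin k, i ≠ j → ∀ u ∈ W i, ∀ v ∈ W j, A u v = 0)
    (xhat : Fin k → V → ℂ)
    (hxhat : ∀ i : Fin k, ∀ u : V, xhat i u = if u ∈ W i then x u else 0) :
    ∀ y ∈ Submodule.span ℂ (Set.range xhat), star y ⬝ᵥ A.mulVec y = 0 := by
  obtain rfl : xhat = fun i => (W i : Set V).indicator x := by
    ext i u
    simp only [hxhat, Set.indicator_apply, Finset.mem_coe]
  exact fun y hy => span_of_component_restrictions_isotropic_general hblock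
    (fun u hu => Set.mem_iUnion.2 (hsupp u hu)) (fun u _ => congrFun hx u) hy hy
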